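/- arXiv:1011.4362 — 3 statements merged into one kernel-verified Lean document; each statement's English description precedes it below -/
import Mathlib

section
/- Assume the m×m matrix ΦᵀΞLΦ is invertible, and let w_TD := (ΦᵀΞLΦ)⁻¹ΦᵀΞ r. Then v̂_TD := Φ w_TD is the unique element v̂ of the column space of Φ satisfying the projected Bellman equation v̂ = Π(T v̂). -/
open Matrix

/-!
A vector `v` is the oblique projection of `x` exactly when `v = Φ w` and `Ψ v = Ψ x` (the Galerkin
condition). For `x = r + A v` the latter is the square linear system `Ψ (1 - A) Φ w = Ψ r`, which
has a unique solution `w` when its matrix is invertible. Temporal-difference learning is the case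
`A = γ P`, `Ψ = Φᵀ Ξ`, where the projection is `ξ`-orthogonal and `Ψ Φ` is a Gram matrix.
-/

section ObliqueProjection

variable {R ι κ : Type*} [CommRing R] [Fintype ι] [Fintype κ]

theorem galerkin_condition_iff [DecidableEq ι] {A : Matrix ι ι R} {r : ι → R} {Φ : Matrix ι κ R}
    {Ψ : Matrix κ ι R} {w : κ → R} :
    Ψ *ᵥ (Φ *ᵥ w) = Ψ *ᵥ (r + A *ᵥ (Φ *ᵥ w)) ↔ (Ψ * (1 - A) * Φ) *ᵥ w = Ψ *ᵥ r := by
  rw [mulVec_add, ← sub_eq_iff_eq_add, ← mulVec_mulVec, ← mulVec_mulVec, sub_mulVec, one_mulVec,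
    mulVec_sub]

variable [DecidableEq κ]

theorem mulVec_eq_iff_eq_inv_mulVec {M : Matrix κ κ R} (hM : IsUnit M) {w b : κ → R} :
    M *ᵥ w = b ↔ w = M⁻¹ *ᵥ b := by
  have hdet : IsUnit M.det := (isUnit_iff_isUnit_det M).1 hM
  constructor
  · rintro rfl
    rw [mulVec_mulVec, nonsing_inv_mul M hdet, one_mulVec]
  · rintro rfl
    rw [mulVec_mulVec, mul_nonsing_inv M hdet, one_mulVec]

/-- The projection onto the column space of `Φ` along the kernel of `Ψ`, meaningful when `Ψ * Φ` is
invertible. For `Ψ = Φᵀ * Ξ` with `Ξ` positive definite it is the `Ξ`-orthogonal projection. -/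
noncomputable def obliqueProjection (Φ : Matrix ι κ R) (Ψ : Matrix κ ι R) : Matrix ι ι R :=
  Φ * (Ψ * Φ)⁻¹ * Ψ

theorem eq_obliqueProjection_mulVec_iff {Φ : Matrix ι κ R} {Ψ : Matrix κ ι R}
    (hΨΦ : IsUnit (Ψ * Φ)) {v x : ι → R} :
    v = obliqueProjection Φ Ψ *ᵥ x ↔ ∃ w, v = Φ *ᵥ w ∧ Ψ *ᵥ (Φ *ᵥ w) = Ψ *ᵥ x := by
  have projection_apply : obliqueProjection Φ Ψ *ᵥ x = Φ *ᵥ ((Ψ * Φ)⁻¹ *ᵥ (Ψ *ᵥ x)) := by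
    simp only [obliqueProjection, ← mulVec_mulVec]
  simp only [projection_apply, mulVec_mulVec _ Ψ Φ, mulVec_eq_iff_eq_inv_mulVec hΨΦ,
    exists_eq_right]

theorem stmt_8_general [DecidableEq ι] {A : Matrix ι ι R} {Φ : Matrix ι κ R} {Ψ : Matrix κ ι R}
    (hΨΦ : IsUnit (Ψ * Φ)) (hinv : IsUnit (Ψ * (1 - A) * Φ)) (r v : ι → R) :
    v = obliqueProjection Φ Ψ *ᵥ (r + A *ᵥ v) ↔
      v = Φ *ᵥ ((Ψ * (1 - A) * Φ)⁻¹ *ᵥ (Ψ *ᵥ r)) :=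
  calc
    v = obliqueProjection Φ Ψ *ᵥ (r + A *ᵥ v)
        ↔ ∃ w, v = Φ *ᵥ w ∧ Ψ *ᵥ (Φ *ᵥ w) = Ψ *ᵥ (r + A *ᵥ v) :=
      eq_obliqueProjection_mulVec_iff hΨΦ
    _ ↔ ∃ w, v = Φ *ᵥ w ∧ Ψ *ᵥ (Φ *ᵥ w) = Ψ *ᵥ (r + A *ᵥ (Φ *ᵥ w)) :=
      exists_congr fun _ => and_congr_right fun hv => by rw [hv]
    _ ↔ v = Φ *ᵥ ((Ψ * (1 - A) * Φ)⁻¹ *ᵥ (Ψ *ᵥ r)) := by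
      simp only [galerkin_condition_iff, mulVec_eq_iff_eq_inv_mulVec hinv, exists_eq_right]

end ObliqueProjection

theorem isUnit_transpose_mul_mul_of_posDef {ι κ : Type*} [Fintype ι] [Fintype κ] [DecidableEq κ]
    {W : Matrix ι ι ℝ} (hW : W.PosDef) {Φ : Matrix ι κ ℝ} (hΦ : Function.Injective Φ.mulVec) :
    IsUnit (Φᵀ * W * Φ) :=
  (hW.conjTranspose_mul_mul_same hΦ).isUnit

theorem stmt_8 (N m : ℕ) (hm : 0 < m) (hmN : m ≤ N)
    (P : Matrix (Fin N) (Fin N) ℝ)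
    (hP0 : ∀ i j, 0 ≤ P i j) (hP1 : ∀ i, ∑ j, P i j = 1)
    (γ : ℝ) (hγ0 : 0 < γ) (hγ1 : γ < 1)
    (r : Fin N → ℝ)
    (T : (Fin N → ℝ) → Fin N → ℝ) (hT : ∀ v, T v = r + γ • P.mulVec v)
    (L : Matrix (Fin N) (Fin N) ℝ) (hL : L = 1 - γ • P)
    (ξ : Fin N → ℝ) (hξ : ∀ i, 0 < ξ i)
    (Φ : Matrix (Fin N) (Fin m) ℝ) (hΦ : Function.Injective Φ.mulVec)
    (Pr : Matrix (Fin N) (Fin N) ℝ)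
    (hPr : Pr = Φ * (Φᵀ * Matrix.diagonal ξ * Φ)⁻¹ * Φᵀ * Matrix.diagonal ξ)
    (hinv : IsUnit (Φᵀ * Matrix.diagonal ξ * L * Φ))
    (wTD : Fin m → ℝ)
    (hwTD : wTD = ((Φᵀ * Matrix.diagonal ξ * L * Φ)⁻¹ * Φᵀ * Matrix.diagonal ξ).mulVec r) :
    Φ.mulVec wTD = Pr.mulVec (T (Φ.mulVec wTD)) ∧
    (∀ v : Fin N → ℝ, (∃ w, v = Φ.mulVec w) → v = Pr.mulVec (T v) → v = Φ.mulVec wTD) := by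
  subst hL hPr hwTD
  have isUnit_gram := isUnit_transpose_mul_mul_of_posDef (.diagonal hξ) hΦ
  have projected_bellman_iff := stmt_8_general isUnit_gram hinv r
  simp only [obliqueProjection, smul_mulVec, mulVec_mulVec, Matrix.mul_assoc, ← hT]
    at projected_bellman_iff ⊢
  exact ⟨(projected_bellman_iff _).2 rfl, fun v _ => (projected_bellman_iff v).1⟩
end

section
/- Let X be an N×m real matrix such that XᵀΦ and XᵀLΦ are invertible, and let v̂_X := Φ(XᵀLΦ)⁻¹Xᵀ r. Then the approximation error of v̂_X factors as v* − v̂_X = (I − Π_{LᵀX})(I − Π) v*, where Π_{LᵀX} = Φ(XᵀLΦ)⁻¹XᵀL and Π is the ξ-orthogonal projection onto the column space of Φ. -/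
open Matrix

/-!
The matrix `L = 1 - γP` is strictly diagonally dominant, hence invertible, so `r = L v*` and the
estimate `v̂_X` is the oblique projection `Π_{LᵀX} v*`, with error `(1 - Π_{LᵀX}) v*`. As
`Π_{LᵀX}` fixes the columns of `Φ`, the operator `1 - Π_{LᵀX}` annihilates everything `Π`
produces, and inserting the factor `1 - Π` changes nothing.
-/

section ObliqueProjection

variable {R k m n : Type*} [CommRing R] [Fintype k] [Fintype m] [DecidableEq m] [Fintype n]

/-- The oblique projection `Π_Y = Φ (YᵀΦ)⁻¹ Yᵀ` onto the column space of `Φ` along the kernel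
of `Yᵀ`. When `YᵀΦ` is not invertible, the junk value of the matrix inverse makes it `0`. -/
noncomputable def obliqueProj (Φ Y : Matrix n m R) : Matrix n n R :=
  Φ * (Yᵀ * Φ)⁻¹ * Yᵀ

theorem obliqueProj_mul_self {Φ Y : Matrix n m R} (hY : IsUnit (Yᵀ * Φ)) :
    obliqueProj Φ Y * Φ = Φ := by
  rw [obliqueProj, Matrix.mul_assoc, Matrix.mul_assoc,
    nonsing_inv_mul _ ((isUnit_iff_isUnit_det _).mp hY), Matrix.mul_one]

theorem one_sub_obliqueProj_mul_one_sub [DecidableEq n] {Φ Y : Matrix n m R}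
    (hY : IsUnit (Yᵀ * Φ)) (A : Matrix m n R) :
    (1 - obliqueProj Φ Y) * (1 - Φ * A) = 1 - obliqueProj Φ Y := by
  have annihilates : (1 - obliqueProj Φ Y) * Φ = 0 := by
    rw [Matrix.sub_mul, Matrix.one_mul, obliqueProj_mul_self hY, sub_self]
  rw [Matrix.mul_sub, Matrix.mul_one, ← Matrix.mul_assoc, annihilates, Matrix.zero_mul, sub_zero]

theorem obliqueProj_transpose_mul (Φ : Matrix n m R) (L : Matrix k n R) (X : Matrix k m R) :
    obliqueProj Φ (Lᵀ * X) = Φ * (Xᵀ * L * Φ)⁻¹ * Xᵀ * L := by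
  rw [obliqueProj, transpose_mul, transpose_transpose, ← Matrix.mul_assoc]

/-- `Φ * A` takes the place of the `ξ`-orthogonal projection. -/
theorem stmt_11_general [DecidableEq n] {Φ : Matrix n m R} {L : Matrix k n R} {X : Matrix k m R}
    (hX : IsUnit (Xᵀ * L * Φ)) {v : n → R} {r : k → R} (hv : L *ᵥ v = r) (A : Matrix m n R) :
    v - (Φ * (Xᵀ * L * Φ)⁻¹ * Xᵀ) *ᵥ r =
      ((1 - Φ * (Xᵀ * L * Φ)⁻¹ * Xᵀ * L) * (1 - Φ * A)) *ᵥ v := by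
  have hY : IsUnit ((Lᵀ * X)ᵀ * Φ) := by rwa [transpose_mul, transpose_transpose]
  have estimate_eq_proj :
      (Φ * (Xᵀ * L * Φ)⁻¹ * Xᵀ) *ᵥ r = obliqueProj Φ (Lᵀ * X) *ᵥ v := by
    rw [← hv, mulVec_mulVec, obliqueProj_transpose_mul]
  rw [estimate_eq_proj, ← obliqueProj_transpose_mul, one_sub_obliqueProj_mul_one_sub hY,
    sub_mulVec, one_mulVec]

end ObliqueProjection

section Discounted

variable {n : Type*} [Fintype n] [DecidableEq n]

theorem isUnit_one_sub_of_sum_row_norm_lt_one {K : Type*} [NormedField K] {A : Matrix n n K}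
    (hA : ∀ i, ∑ j, ‖A i j‖ < 1) : IsUnit (1 - A) := by
  rw [isUnit_iff_isUnit_det, isUnit_iff_ne_zero]
  refine det_ne_zero_of_sum_row_lt_diag fun i ↦ ?_
  calc ∑ j ∈ Finset.univ.erase i, ‖(1 - A) i j‖
      = ∑ j ∈ Finset.univ.erase i, ‖A i j‖ :=
        Finset.sum_congr rfl fun j hj ↦ by
          rw [Matrix.sub_apply, one_apply_ne (Finset.ne_of_mem_erase hj).symm, zero_sub, norm_neg]
    _ = ∑ j, ‖A i j‖ - ‖A i i‖ := Finset.sum_erase_eq_sub (Finset.mem_univ i)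
    _ < ‖(1 : K)‖ - ‖A i i‖ := by rw [norm_one]; exact sub_lt_sub_right (hA i) _
    _ ≤ ‖(1 - A) i i‖ := by
        rw [Matrix.sub_apply, one_apply_eq]
        exact norm_sub_norm_le _ _

theorem isUnit_one_sub_smul_of_mem_rowStochastic {P : Matrix n n ℝ} (hP : P ∈ rowStochastic ℝ n)
    {γ : ℝ} (hγ : |γ| < 1) : IsUnit (1 - γ • P) := by
  refine isUnit_one_sub_of_sum_row_norm_lt_one fun i ↦ ?_
  calc ∑ j, ‖(γ • P) i j‖ = ∑ j, |γ| * P i j := by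
        refine Finset.sum_congr rfl fun j _ ↦ ?_
        rw [Matrix.smul_apply, norm_smul, Real.norm_eq_abs,
          Real.norm_of_nonneg (nonneg_of_mem_rowStochastic hP)]
    _ = |γ| := by rw [← Finset.mul_sum, sum_row_of_mem_rowStochastic hP, mul_one]
    _ < 1 := hγ

end Discounted

theorem stmt_11 (N m : ℕ) (hm : 0 < m) (hmN : m ≤ N)
    (P : Matrix (Fin N) (Fin N) ℝ)
    (hP0 : ∀ i j, 0 ≤ P i j) (hP1 : ∀ i, ∑ j, P i j = 1)
    (γ : ℝ) (hγ0 : 0 < γ) (hγ1 : γ < 1)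
    (r : Fin N → ℝ)
    (L : Matrix (Fin N) (Fin N) ℝ) (hL : L = 1 - γ • P)
    (vstar : Fin N → ℝ) (hv : vstar = L⁻¹.mulVec r)
    (ξ : Fin N → ℝ) (hξ : ∀ i, 0 < ξ i)
    (Φ : Matrix (Fin N) (Fin m) ℝ) (hΦ : Function.Injective Φ.mulVec)
    (Pr : Matrix (Fin N) (Fin N) ℝ)
    (hPr : Pr = Φ * (Φᵀ * Matrix.diagonal ξ * Φ)⁻¹ * Φᵀ * Matrix.diagonal ξ)
    (X : Matrix (Fin N) (Fin m) ℝ)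
    (hX1 : IsUnit (Xᵀ * Φ)) (hX2 : IsUnit (Xᵀ * L * Φ))
    (PiLX : Matrix (Fin N) (Fin N) ℝ) (hPiLX : PiLX = Φ * (Xᵀ * L * Φ)⁻¹ * Xᵀ * L)
    (vX : Fin N → ℝ) (hvX : vX = (Φ * (Xᵀ * L * Φ)⁻¹ * Xᵀ).mulVec r) :
    vstar - vX = ((1 - PiLX) * (1 - Pr)).mulVec vstar := by
  have hLunit : IsUnit L := hL ▸ isUnit_one_sub_smul_of_mem_rowStochastic
    (mem_rowStochastic_iff_sum.mpr ⟨hP0, hP1⟩) ((abs_of_pos hγ0).trans_lt hγ1)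
  have bellman : L *ᵥ vstar = r := by
    rw [hv, mulVec_mulVec, mul_nonsing_inv _ ((isUnit_iff_isUnit_det _).mp hLunit), one_mulVec]
  have hPr_factor : Pr = Φ * ((Φᵀ * diagonal ξ * Φ)⁻¹ * Φᵀ * diagonal ξ) := by
    simp only [hPr, Matrix.mul_assoc]
  rw [hvX, hPiLX, hPr_factor]
  exact stmt_11_general hX2 bellman _
end

section
/- Let E be a continuous linear projection (E ∘ E = E) on a real inner product space H, with E ≠ 0 and E ≠ id. Then the operator norm of E equals the operator norm of id − E: ‖E‖ = ‖id − E‖. -/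
/-!
If `p` is idempotent then `p x` and `x - p x` are a fixed vector `u` and a kernel vector `v` with
sum `x`. If both are nonzero, exchanging their lengths while keeping their directions gives vectors
`u'`, `v'` with `‖u' + v'‖ = ‖u + v‖`, `p (u' + v') = u'` and `‖u'‖ = ‖v‖`. Hence
`‖x - p x‖ = ‖p (u' + v')‖ ≤ ‖p‖ * ‖x‖`, which for `u = 0` follows from `1 ≤ ‖p‖`. So
`‖1 - p‖ ≤ ‖p‖`, and the same inequality for the idempotent `1 - p` gives equality.
-/

theorem one_le_norm_of_isIdempotentElem {R : Type*} [NonUnitalSeminormedRing R] {p : R}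
    (hp : IsIdempotentElem p) (hp₀ : ‖p‖ ≠ 0) : 1 ≤ ‖p‖ := by
  have hmul : ‖p‖ ≤ ‖p‖ * ‖p‖ := by simpa only [hp.eq] using norm_mul_le p p
  exact (le_mul_iff_one_le_right (lt_of_le_of_ne' (norm_nonneg p) hp₀)).mp hmul

section InnerProductSpace

variable {𝕜 H : Type*} [RCLike 𝕜] [SeminormedAddCommGroup H] [InnerProductSpace 𝕜 H]

-- Dividing by `‖u‖ * ‖v‖` gives the exchange of lengths, but this form needs no division.
theorem norm_norm_sq_smul_add_norm_sq_smul (u v : H) :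
    ‖(‖v‖ ^ 2 : 𝕜) • u + (‖u‖ ^ 2 : 𝕜) • v‖ = ‖u‖ * ‖v‖ * ‖u + v‖ := by
  rw [← sq_eq_sq₀ (by positivity) (by positivity), mul_pow, norm_add_sq (𝕜 := 𝕜),
    norm_add_sq (𝕜 := 𝕜)]
  have hinner : RCLike.re (inner 𝕜 ((‖v‖ ^ 2 : 𝕜) • u) ((‖u‖ ^ 2 : 𝕜) • v)) =
      ‖v‖ ^ 2 * ‖u‖ ^ 2 * RCLike.re (inner 𝕜 u v) := by
    simp only [← RCLike.ofReal_pow, inner_smul_left, inner_smul_right, RCLike.conj_ofReal,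
      RCLike.re_ofReal_mul, mul_assoc, mul_left_comm]
  rw [hinner]
  simp only [norm_smul, norm_pow, RCLike.norm_ofReal, abs_norm]
  ring

theorem norm_le_opNorm_mul_norm_add_of_map_eq_zero {p : H →L[𝕜] H} (hp : 1 ≤ ‖p‖) {u v : H}
    (hu : p u = u) (hv : p v = 0) : ‖v‖ ≤ ‖p‖ * ‖u + v‖ := by
  rcases (norm_nonneg u).eq_or_lt' with hu₀ | hu₀
  · have hnorm : ‖v‖ ≤ ‖u + v‖ := by
      simpa only [hu₀, add_zero, add_comm v u] using norm_le_add_norm_add v u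
    exact hnorm.trans (le_mul_of_one_le_left (norm_nonneg _) hp)
  rcases (norm_nonneg v).eq_or_lt' with hv₀ | hv₀
  · rw [hv₀]
    positivity
  have hmap : p ((‖v‖ ^ 2 : 𝕜) • u + (‖u‖ ^ 2 : 𝕜) • v) = (‖v‖ ^ 2 : 𝕜) • u := by
    rw [map_add, map_smul, map_smul, hu, hv, smul_zero, add_zero]
  refine le_of_mul_le_mul_left ?_ (mul_pos hu₀ hv₀)
  calc
    ‖u‖ * ‖v‖ * ‖v‖ = ‖p ((‖v‖ ^ 2 : 𝕜) • u + (‖u‖ ^ 2 : 𝕜) • v)‖ := by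
      rw [hmap, norm_smul, norm_pow, RCLike.norm_ofReal, abs_norm]
      ring
    _ ≤ ‖p‖ * ‖(‖v‖ ^ 2 : 𝕜) • u + (‖u‖ ^ 2 : 𝕜) • v‖ := p.le_opNorm _
    _ = ‖u‖ * ‖v‖ * (‖p‖ * ‖u + v‖) := by
      rw [norm_norm_sq_smul_add_norm_sq_smul, mul_left_comm]

theorem norm_one_sub_le_of_isIdempotentElem {p : H →L[𝕜] H} (hp : IsIdempotentElem p)
    (hp₀ : ‖p‖ ≠ 0) : ‖1 - p‖ ≤ ‖p‖ := by
  refine ContinuousLinearMap.opNorm_le_bound _ (norm_nonneg p) fun x => ?_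
  have hfixed : p (p x) = p x := DFunLike.congr_fun hp.eq x
  have hker : p ((1 - p) x) = 0 := DFunLike.congr_fun hp.mul_one_sub_self x
  have hsum : p x + (1 - p) x = x := add_sub_cancel (p x) x
  simpa only [hsum] using norm_le_opNorm_mul_norm_add_of_map_eq_zero
    (one_le_norm_of_isIdempotentElem hp hp₀) hfixed hker

theorem stmt_16_general {p : H →L[𝕜] H} (hp : IsIdempotentElem p) (hp₀ : ‖p‖ ≠ 0)
    (hp₁ : ‖1 - p‖ ≠ 0) : ‖p‖ = ‖1 - p‖ := by
  refine le_antisymm ?_ (norm_one_sub_le_of_isIdempotentElem hp hp₀)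
  simpa only [sub_sub_cancel] using norm_one_sub_le_of_isIdempotentElem hp.one_sub hp₁

end InnerProductSpace

theorem stmt_16 (H : Type*) [NormedAddCommGroup H] [InnerProductSpace ℝ H]
    (E : H →L[ℝ] H) (hE : E.comp E = E)
    (h0 : E ≠ 0) (h1 : E ≠ ContinuousLinearMap.id ℝ H) :
    ‖E‖ = ‖ContinuousLinearMap.id ℝ H - E‖ :=
  stmt_16_general hE (norm_ne_zero_iff.mpr h0) (norm_ne_zero_iff.mpr (sub_ne_zero.mpr h1.symm))
end
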